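/- Let (A,B) be an invertible Jones pair of n×n complex matrices with A symmetric, let d ∈ ℂ satisfy d² = n, and let V be the associated 4n×4n matrix. Then for all F ∈ N_A, all G, H ∈ N_{A,B} and K paired with H, the matrix M(F,G,H) belongs to the Nomura algebra N_V of the type-II matrix V; that is, for all r, s ∈ {1,…,4n}, the vector (Ve_r)∘(V^(-)e_s) is an eigenvector of M(F,G,H). -/

import Mathlib

open Matrix

variable {m : Type*} [Fintype m] [DecidableEq m]

/-- The Schur (entrywise) inverse `A^(-)` of a matrix: `(A^(-))_{ij} = (A_{ij})⁻¹`. -/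
noncomputable def sinv (A : Matrix m m ℂ) : Matrix m m ℂ := Matrix.of fun i j => (A i j)⁻¹

/-- A type-II matrix: a Schur invertible matrix `W` with `W * (W^(-))ᵀ = n • I`,
where `n` is the size of the matrix. -/
def IsTypeII (A : Matrix m m ℂ) : Prop :=
  (∀ i j, A i j ≠ 0) ∧ A * (sinv A)ᵀ = (Fintype.card m : ℂ) • (1 : Matrix m m ℂ)

/-- `v_{ij} = (A e_i) ∘ (B e_j)`: the entrywise product of column `i` of `A`
with column `j` of `B`. -/
def colProd (A B : Matrix m m ℂ) (i j : m) : m → ℂ := fun k => A k i * B k j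

/-- Membership in the Nomura algebra `N_{A,B}`: every `v_{ij}` is an eigenvector of `M`. -/
def InNomura (A B M : Matrix m m ℂ) : Prop :=
  ∀ i j, ∃ c : ℂ, M.mulVec (colProd A B i j) = c • colProd A B i j

/-- `S = Θ_{A,B}(M)`: the matrix of eigenvalues, i.e. `M v_{ij} = S_{ij} v_{ij}` for all `i,j`. -/
def IsTheta (A B M S : Matrix m m ℂ) : Prop :=
  ∀ i j, M.mulVec (colProd A B i j) = S i j • colProd A B i j

/-- `(A,B)` is a Jones pair: `A` invertible, `B` Schur invertible, and
`X_A Δ_B X_A = Δ_B X_A Δ_B` and `X_A Δ_{Bᵀ} X_A = Δ_{Bᵀ} X_A Δ_{Bᵀ}`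
as operators on matrices. -/
def IsJonesPair (A B : Matrix m m ℂ) : Prop :=
  IsUnit A ∧ (∀ i j, B i j ≠ 0) ∧
  (∀ M : Matrix m m ℂ, A * (B ⊙ (A * M)) = B ⊙ (A * (B ⊙ M))) ∧
  (∀ M : Matrix m m ℂ, A * (Bᵀ ⊙ (A * M)) = Bᵀ ⊙ (A * (Bᵀ ⊙ M)))

/-- An invertible Jones pair: a Jones pair in which moreover `A` is Schur
invertible and `B` is invertible. -/
def IsInvertibleJonesPair (A B : Matrix m m ℂ) : Prop :=
  IsJonesPair A B ∧ (∀ i j, A i j ≠ 0) ∧ IsUnit B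

/-- `W` is a spin model: for some `d` with `d² = n`, `(d⁻¹ W, W^(-))` is an
invertible Jones pair. -/
def IsSpinModel (W : Matrix m m ℂ) : Prop :=
  ∃ d : ℂ, d ^ 2 = (Fintype.card m : ℂ) ∧ IsInvertibleJonesPair (d⁻¹ • W) (sinv W)

/-- Given an invertible Jones pair `(A,B)` with `A` symmetric, `K` is paired with
`H ∈ N_{A,B}` if `Kᵀ ∈ N_{A,Bᵀ}` and `Θ_{A,B}(H) = (Θ_{A,Bᵀ}(Kᵀ))ᵀ`. -/
def Paired (A B H K : Matrix m m ℂ) : Prop :=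
  ∃ S : Matrix m m ℂ, IsTheta A B H S ∧ IsTheta A Bᵀ Kᵀ Sᵀ

/-- The `4n × 4n` matrix with `4 × 4` block structure
`[[P, Q, R, R], [Q, P, R, R], [S, S, T, U], [S, S, U, T]]`. -/
def blockMat {n : ℕ} (P Q R S T U : Matrix (Fin n) (Fin n) ℂ) :
    Matrix (Fin 4 × Fin n) (Fin 4 × Fin n) ℂ :=
  Matrix.of fun x y =>
    (![![P, Q, R, R], ![Q, P, R, R], ![S, S, T, U], ![S, S, U, T]] x.1 y.1) x.2 y.2

/-- Yamada's `4n × 4n` matrix `V` built from `A`, `B` and `d` with `d² = n`. -/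
noncomputable def Vmat {n : ℕ} (A B : Matrix (Fin n) (Fin n) ℂ) (d : ℂ) :
    Matrix (Fin 4 × Fin n) (Fin 4 × Fin n) ℂ :=
  blockMat (d • A) (-(d • A)) (sinv B) (sinv B)ᵀ (d • A) (-(d • A))

section helpers

theorem sinv_sinv' (A : Matrix m m ℂ) : sinv (sinv A) = A := by
  ext i j; simp [sinv]

theorem sinv_transpose' (A : Matrix m m ℂ) : sinv Aᵀ = (sinv A)ᵀ := by
  ext i j; simp [sinv]

theorem IsTheta.swap {A B M S : Matrix m m ℂ} (h : IsTheta A B M S) : IsTheta B A M Sᵀ := by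
  intro i j
  have e : colProd B A i j = colProd A B j i := by
    funext k; simp [colProd, mul_comm]
  rw [e, h j i]; rfl

/-- two-sided type-II condition -/
structure T2 (A : Matrix m m ℂ) : Prop where
  card : (Fintype.card m : ℂ) ≠ 0
  ne : ∀ i j, A i j ≠ 0
  l : A * (sinv A)ᵀ = (Fintype.card m : ℂ) • (1 : Matrix m m ℂ)
  r : (sinv A)ᵀ * A = (Fintype.card m : ℂ) • (1 : Matrix m m ℂ)

theorem T2.mk' {A : Matrix m m ℂ} (hc : (Fintype.card m : ℂ) ≠ 0) (hne : ∀ i j, A i j ≠ 0)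
    (l : A * (sinv A)ᵀ = (Fintype.card m : ℂ) • (1 : Matrix m m ℂ)) : T2 A := by
  refine ⟨hc, hne, l, ?_⟩
  have h1 : A * ((Fintype.card m : ℂ)⁻¹ • (sinv A)ᵀ) = 1 := by
    rw [Matrix.mul_smul, l, smul_smul, inv_mul_cancel₀ hc, one_smul]
  have h2 := mul_eq_one_comm.mp h1
  rw [Matrix.smul_mul] at h2
  rw [← h2, smul_smul, mul_inv_cancel₀ hc, one_smul]

theorem T2.sinv {A : Matrix m m ℂ} (h : T2 A) : T2 (sinv A) := by
  refine ⟨h.card, fun i j => by simpa [_root_.sinv] using h.ne i j, ?_, ?_⟩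
  · rw [sinv_sinv']
    have := congrArg Matrix.transpose h.l
    simpa [Matrix.transpose_mul] using this
  · rw [sinv_sinv']
    have := congrArg Matrix.transpose h.r
    simpa [Matrix.transpose_mul] using this

theorem T2.transpose {A : Matrix m m ℂ} (h : T2 A) : T2 Aᵀ := by
  refine ⟨h.card, fun i j => h.ne j i, ?_, ?_⟩
  · rw [sinv_transpose', Matrix.transpose_transpose]
    have := congrArg Matrix.transpose h.r
    simpa [Matrix.transpose_mul] using this
  · rw [sinv_transpose', Matrix.transpose_transpose]
    have := congrArg Matrix.transpose h.l
    simpa [Matrix.transpose_mul] using this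

theorem theta_iff_row (A B M S : Matrix m m ℂ) :
    IsTheta A B M S ↔ ∀ i, M * diagonal (fun k => A k i) * B
      = diagonal (fun k => A k i) * B * diagonal (S i) := by
  constructor
  · intro h i
    ext a j
    have := congrFun (h i j) a
    simp only [mulVec, dotProduct, colProd, Pi.smul_apply, smul_eq_mul] at this
    simp only [Matrix.mul_apply (M := M * _), Matrix.mul_diagonal, Matrix.diagonal_mul]
    rw [mul_comm (A a i * B a j), ← this]
    exact Finset.sum_congr rfl fun k _ => by ring
  · intro h i j
    funext a
    have := congrFun (congrFun (h i) a) j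
    simp only [Matrix.mul_apply (M := M * _), Matrix.mul_diagonal, Matrix.diagonal_mul] at this
    simp only [mulVec, dotProduct, colProd, Pi.smul_apply, smul_eq_mul]
    rw [mul_comm (S i j), ← this]
    exact Finset.sum_congr rfl fun k _ => by ring

theorem T2.cancel_right {B : Matrix m m ℂ} (h : T2 B) {X Y : Matrix m m ℂ}
    (e : X * (_root_.sinv B)ᵀ = Y * (_root_.sinv B)ᵀ) : X = Y := by
  have := congrArg (· * B) e
  simp only [Matrix.mul_assoc, h.r, Matrix.mul_smul, Matrix.mul_one] at this
  exact smul_right_injective _ h.card this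

/-- the duality lemma -/
theorem theta_iff_dual {A B : Matrix m m ℂ} (hA : ∀ i j, A i j ≠ 0) (hB : T2 B)
    (M S : Matrix m m ℂ) :
    IsTheta A B M S ↔ ∀ c a, S *ᵥ colProd (sinv B)ᵀ Bᵀ c a
      = ((Fintype.card m : ℂ) * M a c) • colProd Aᵀ (sinv A)ᵀ c a := by
  rw [theta_iff_row]
  have key : ∀ i, (M * diagonal (fun k => A k i) * B
      = diagonal (fun k => A k i) * B * diagonal (S i)) ↔
      ∀ a c, (Fintype.card m : ℂ) * (M a c * A c i) =
        A a i * ∑ j, S i j * ((B c j)⁻¹ * B a j) := by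
    intro i
    have e1 : M * diagonal (fun k => A k i) * B * (sinv B)ᵀ
        = (Fintype.card m : ℂ) • (M * diagonal (fun k => A k i)) := by
      rw [Matrix.mul_assoc, hB.l, Matrix.mul_smul, Matrix.mul_one]
    have e2 : ∀ a c, (diagonal (fun k => A k i) * B * diagonal (S i) * (sinv B)ᵀ) a c
        = A a i * ∑ j, S i j * ((B c j)⁻¹ * B a j) := by
      intro a c
      rw [Matrix.mul_apply, Finset.mul_sum]
      refine Finset.sum_congr rfl fun k _ => ?_
      simp only [Matrix.mul_diagonal, Matrix.diagonal_mul, sinv, Matrix.transpose_apply,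
        Matrix.of_apply]
      ring
    constructor
    · intro h a c
      rw [← e2, ← h, e1]
      simp [Matrix.mul_diagonal]
    · intro h
      apply hB.cancel_right
      ext a c
      rw [e1, e2, ← h]
      simp [Matrix.mul_diagonal]
  constructor
  · intro h c a
    funext i
    have := (key i).1 (h i) a c
    simp only [mulVec, dotProduct, colProd, Pi.smul_apply, smul_eq_mul, sinv,
      Matrix.transpose_apply, Matrix.of_apply]
    have ha := hA a i
    field_simp
    field_simp at this
    simp only [div_eq_mul_inv, mul_assoc, mul_comm, mul_left_comm] at this ⊢
    exact this.symm
  · intro h i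
    rw [key]
    intro a c
    have := congrFun (h c a) i
    simp only [mulVec, dotProduct, colProd, Pi.smul_apply, smul_eq_mul, sinv,
      Matrix.transpose_apply, Matrix.of_apply] at this
    rw [this]
    have ha := hA a i
    field_simp

theorem theta_transpose {A B : Matrix m m ℂ} (hA : T2 A) (hB : T2 B)
    {M S : Matrix m m ℂ} (h : IsTheta A B M S) : IsTheta (sinv A) (sinv B) Mᵀ S := by
  rw [theta_iff_dual hA.sinv.ne hB.sinv]
  rw [theta_iff_dual hA.ne hB] at h
  intro c a
  rw [sinv_sinv', sinv_sinv']
  have e : ∀ (X Y : Matrix m m ℂ) c a, colProd X Y c a = colProd Y X a c := by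
    intro X Y c a; funext k; simp [colProd, mul_comm]
  rw [e, e (sinv A)ᵀ, h a c]; rfl

theorem ext_colProd {X Y : Matrix m m ℂ} (hX : T2 X) (hY : ∀ i j, Y i j ≠ 0)
    {M N : Matrix m m ℂ}
    (h : ∀ i j, M *ᵥ colProd X Y i j = N *ᵥ colProd X Y i j) : M = N := by
  ext a b
  have e : ∀ (M : Matrix m m ℂ) i, (M *ᵥ colProd X Y i b) a
      = ((M * diagonal (fun k => Y k b)) * X) a i := by
    intro M i
    simp only [Matrix.mul_apply (M := M * _), Matrix.mul_diagonal, mulVec, dotProduct, colProd]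
    exact Finset.sum_congr rfl fun k _ => by ring
  have h2 : ∀ i, ((M * diagonal (fun k => Y k b)) * X) a i
      = ((N * diagonal (fun k => Y k b)) * X) a i := by
    intro i; rw [← e, ← e, h]
  have h3 : ((M * diagonal (fun k => Y k b)) * X * (sinv X)ᵀ) a b
      = ((N * diagonal (fun k => Y k b)) * X * (sinv X)ᵀ) a b := by
    rw [Matrix.mul_apply, Matrix.mul_apply]
    exact Finset.sum_congr rfl fun k _ => by rw [h2]
  rw [Matrix.mul_assoc _ X, hX.l, Matrix.mul_assoc _ X, hX.l] at h3
  simp only [Matrix.mul_smul, Matrix.mul_one, Matrix.smul_apply, Matrix.mul_diagonal,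
    smul_eq_mul] at h3
  exact mul_right_cancel₀ (hY b b) (mul_left_cancel₀ hX.card h3)

theorem theta_of_jones {A B : Matrix m m ℂ}
    (h : ∀ M : Matrix m m ℂ, A * (B ⊙ (A * M)) = B ⊙ (A * (B ⊙ M))) : IsTheta A B A B := by
  intro i j
  funext a
  have := congrFun (congrFun (h (Matrix.single i j 1)) a) j
  simp only [Matrix.mul_apply, Matrix.hadamard_apply, Matrix.single_apply] at this
  simp [mulVec, dotProduct, colProd] at this ⊢
  rw [← Finset.sum_congr rfl fun k _ => by rw [mul_comm (A k i)]] 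
  rw [this]; ring

/-- conjugates with equal diagonals: the core of the type-II proofs -/
theorem typeII_core {X Xi B : Matrix m m ℂ} {al : m → ℂ} (hc : (Fintype.card m : ℂ) ≠ 0)
    (hX : X * Xi = 1) (hB : IsUnit B)
    (h : ∀ i a, ∑ j, B i j * (X a j * Xi j a) = al a) (hal : ∀ a b, al a = al b) :
    ∀ a j, X a j * Xi j a = (Fintype.card m : ℂ)⁻¹ := by
  obtain ⟨C, hCB⟩ := hB.exists_left_inv
  have hv : ∀ a b j, X a j * Xi j a = X b j * Xi j b := by
    intro a b j
    have : B *ᵥ (fun j => X a j * Xi j a) = B *ᵥ (fun j => X b j * Xi j b) := by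
      funext i
      simp only [mulVec, dotProduct]
      rw [h i a, h i b, hal a b]
    have := congrArg (C *ᵥ ·) this
    simp only [Matrix.mulVec_mulVec, hCB, Matrix.one_mulVec] at this
    exact congrFun this j
  intro a j
  have h1 : (Xi * X) j j = 1 := by rw [mul_eq_one_comm.mp hX]; simp
  rw [Matrix.mul_apply] at h1
  have h2 : ∑ b, Xi j b * X b j = ∑ _b : m, X a j * Xi j a :=
    Finset.sum_congr rfl fun b _ => by rw [mul_comm, hv b a j]
  rw [h2, Finset.sum_const, Finset.card_univ, nsmul_eq_mul] at h1
  exact (inv_eq_of_mul_eq_one_right h1).symm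

theorem T2.of_core {X Xi : Matrix m m ℂ} (hc : (Fintype.card m : ℂ) ≠ 0)
    (hX : X * Xi = 1) (h : ∀ a j, X a j * Xi j a = (Fintype.card m : ℂ)⁻¹) : T2 X := by
  have hne : ∀ i j, X i j ≠ 0 := by
    intro i j h0
    have := h i j
    rw [h0, zero_mul] at this
    exact inv_ne_zero hc this.symm
  refine T2.mk' hc hne ?_
  have e : (_root_.sinv X)ᵀ = (Fintype.card m : ℂ) • Xi := by
    ext j a
    simp only [_root_.sinv, Matrix.transpose_apply, Matrix.of_apply, Matrix.smul_apply, smul_eq_mul]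
    have := h a j
    have h0 := hne a j
    field_simp at this ⊢
    rw [← this]
  rw [e, Matrix.mul_smul, hX]

theorem jones_typeII {A B : Matrix m m ℂ} (hc : (Fintype.card m : ℂ) ≠ 0)
    (hA : IsUnit A) (hB : IsUnit B) (hAn : ∀ i j, A i j ≠ 0) (hBn : ∀ i j, B i j ≠ 0)
    (hAs : Aᵀ = A) (h : IsTheta A B A B) : T2 A ∧ T2 B := by
  obtain ⟨C, hBC⟩ := hB.exists_right_inv
  obtain ⟨Ai, hAi⟩ := hA.exists_right_inv
  have hrow := (theta_iff_row A B A B).1 h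
  -- diagonal of `B D^i B⁻¹`
  have h1 : ∀ i a, ∑ j, B i j * (B a j * C j a) = A a a := by
    intro i a
    have e := congrArg (· * C) (hrow i)
    simp only [Matrix.mul_assoc _ B C, hBC, Matrix.mul_one] at e
    have e := congrFun (congrFun e a) a
    rw [Matrix.mul_diagonal, Matrix.mul_apply] at e
    simp only [Matrix.mul_diagonal, Matrix.diagonal_mul] at e
    have e2 : A a i * ∑ j, B i j * (B a j * C j a) = A a i * A a a := by
      rw [mul_comm _ (A a a), e, Finset.mul_sum]
      exact Finset.sum_congr rfl fun k _ => by ring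
    exact mul_left_cancel₀ (hAn a i) e2
  have hrow2 := (theta_iff_row B A A Bᵀ).1 h.swap
  -- diagonal of `A D_j A⁻¹`
  have h2 : ∀ i a, ∑ j, Bᵀ i j * (A a j * Ai j a) = A a a := by
    intro i a
    have e := congrArg (· * Ai) (hrow2 i)
    simp only [Matrix.mul_assoc _ A Ai, hAi, Matrix.mul_one] at e
    have e := congrFun (congrFun e a) a
    rw [Matrix.mul_diagonal, Matrix.mul_apply] at e
    simp only [Matrix.mul_diagonal, Matrix.diagonal_mul] at e
    have e2 : B a i * ∑ j, Bᵀ i j * (A a j * Ai j a) = B a i * A a a := by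
      rw [mul_comm _ (A a a), e, Finset.mul_sum]
      exact Finset.sum_congr rfl fun k _ => by ring
    exact mul_left_cancel₀ (hBn a i) e2
  have hCB := mul_eq_one_comm.mp hBC
  -- the diagonal of `A` is constant
  have hsum : ∀ a, A a a * ∑ j, (C *ᵥ fun _ => (1 : ℂ)) j = 1 := by
    intro a
    have hx : (fun j => B a j * C j a) = A a a • (C *ᵥ fun _ => (1 : ℂ)) := by
      have : B *ᵥ (fun j => B a j * C j a) = A a a • (fun _ => (1 : ℂ)) := by
        funext i
        simp only [mulVec, dotProduct]
        rw [h1 i a]; simp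
      have := congrArg (C *ᵥ ·) this
      simpa only [Matrix.mulVec_mulVec, hCB, Matrix.one_mulVec, Matrix.mulVec_smul] using this
    have h3 : (B * C) a a = 1 := by rw [hBC]; simp
    rw [Matrix.mul_apply] at h3
    refine Eq.trans ?_ h3
    rw [Finset.mul_sum]
    exact Finset.sum_congr rfl fun j _ => (congrFun hx j).symm
  have hal : ∀ a b, A a a = A b b := fun a b => by
    have ha := hsum a
    have hb := hsum b
    have h0 : ∑ j, (C *ᵥ fun _ => (1 : ℂ)) j ≠ 0 := right_ne_zero_of_mul_eq_one ha
    exact mul_right_cancel₀ h0 (ha.trans hb.symm)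
  have hBt : IsUnit Bᵀ := (Matrix.isUnit_transpose B).2 hB
  exact ⟨T2.of_core hc hAi (typeII_core hc hAi hBt h2 hal),
    T2.of_core hc hBC (typeII_core hc hBC hB h1 hal)⟩

/-- The working context: all relations used below. -/
structure Ctx (A B C : Matrix m m ℂ) : Prop where
  tA : T2 A
  tB : T2 B
  sA : Aᵀ = A
  BC : B * C = 1
  CB : C * B = 1
  J1 : IsTheta A B A B
  J2 : IsTheta A Bᵀ A Bᵀ

namespace Ctx
variable {A B C : Matrix m m ℂ}

theorem tr (h : Ctx A B C) : Ctx A Bᵀ Cᵀ :=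
  ⟨h.tA, h.tB.transpose, h.sA, by rw [← Matrix.transpose_mul, h.CB, Matrix.transpose_one],
    by rw [← Matrix.transpose_mul, h.BC, Matrix.transpose_one], h.J2, by simpa using h.J1⟩

theorem sa (h : Ctx A B C) : (sinv A)ᵀ = sinv A := by rw [← sinv_transpose', h.sA]

theorem symm (h : Ctx A B C) (i j : m) : A i j = A j i := congrFun (congrFun h.sA j) i

theorem cA (h : Ctx A B C) (i j : m) : (Fintype.card m : ℂ) * A i j ≠ 0 :=
  mul_ne_zero h.tA.card (h.tA.ne i j)

/-- `S w = n M_{ji} u`. -/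
theorem dual (h : Ctx A B C) (M S : Matrix m m ℂ) : IsTheta A B M S ↔ ∀ i j,
    S *ᵥ colProd (sinv B)ᵀ Bᵀ i j
      = ((Fintype.card m : ℂ) * M j i) • colProd A (sinv A) i j := by
  rw [theta_iff_dual h.tA.ne h.tB, h.sA, h.sa]

theorem dualT (h : Ctx A B C) {M S : Matrix m m ℂ} (hM : IsTheta A B M S) (i j : m) :
    Sᵀ *ᵥ colProd A (sinv A) i j
      = ((Fintype.card m : ℂ) * M i j) • colProd (sinv B)ᵀ Bᵀ i j := by
  have := (theta_iff_dual h.tB.ne h.tA M Sᵀ).1 hM.swap j i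
  have e : ∀ (X Y : Matrix m m ℂ) c a, colProd X Y c a = colProd Y X a c := by
    intro X Y c a; funext k; simp [colProd, mul_comm]
  rw [h.sA, h.sa, e, e Bᵀ] at this
  exact this

theorem dualA (h : Ctx A B C) (F S : Matrix m m ℂ) : IsTheta A (sinv A) F S ↔ ∀ i j,
    S *ᵥ colProd A (sinv A) i j
      = ((Fintype.card m : ℂ) * F j i) • colProd A (sinv A) i j := by
  rw [theta_iff_dual h.tA.ne h.tA.sinv, sinv_sinv', h.sA, h.sa]

theorem dualB (h : Ctx A B C) (F T : Matrix m m ℂ) : IsTheta (sinv B) B F T ↔ ∀ i j,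
    T *ᵥ colProd (sinv B)ᵀ Bᵀ i j
      = ((Fintype.card m : ℂ) * F j i) • colProd (sinv B)ᵀ Bᵀ i j := by
  rw [theta_iff_dual h.tB.sinv.ne h.tB, sinv_sinv']

theorem Bw (h : Ctx A B C) (i j : m) : B *ᵥ colProd (sinv B)ᵀ Bᵀ i j
      = ((Fintype.card m : ℂ) * A i j) • colProd A (sinv A) i j := by
  rw [(h.dual A B).1 h.J1, h.symm]

theorem Btu (h : Ctx A B C) (i j : m) : Bᵀ *ᵥ colProd A (sinv A) i j
      = ((Fintype.card m : ℂ) * A i j) • colProd (sinv B)ᵀ Bᵀ i j := h.dualT h.J1 i j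

theorem Btw' (h : Ctx A B C) (i j : m) : Bᵀ *ᵥ colProd (sinv B) B i j
      = ((Fintype.card m : ℂ) * A i j) • colProd A (sinv A) i j := by
  simpa [sinv_transpose'] using h.tr.Bw i j

theorem Bu (h : Ctx A B C) (i j : m) : B *ᵥ colProd A (sinv A) i j
      = ((Fintype.card m : ℂ) * A i j) • colProd (sinv B) B i j := by
  simpa [sinv_transpose'] using h.tr.Btu i j

theorem inv_aux {X Y : Matrix m m ℂ} (hYX : Y * X = 1) {c : ℂ} (hc : c ≠ 0) {p q : m → ℂ}
    (e : X *ᵥ p = c • q) : Y *ᵥ q = c⁻¹ • p := by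
  have := congrArg (Y *ᵥ ·) e
  simp only [Matrix.mulVec_mulVec, hYX, Matrix.one_mulVec, Matrix.mulVec_smul] at this
  rw [this, smul_smul, inv_mul_cancel₀ hc, one_smul]

theorem Cu (h : Ctx A B C) (i j : m) : C *ᵥ colProd A (sinv A) i j
      = ((Fintype.card m : ℂ) * A i j)⁻¹ • colProd (sinv B)ᵀ Bᵀ i j :=
  inv_aux h.CB (h.cA i j) (h.Bw i j)

theorem Ctw (h : Ctx A B C) (i j : m) : Cᵀ *ᵥ colProd (sinv B)ᵀ Bᵀ i j
      = ((Fintype.card m : ℂ) * A i j)⁻¹ • colProd A (sinv A) i j :=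
  inv_aux h.tr.CB (h.cA i j) (h.Btu i j)

theorem Ctu (h : Ctx A B C) (i j : m) : Cᵀ *ᵥ colProd A (sinv A) i j
      = ((Fintype.card m : ℂ) * A i j)⁻¹ • colProd (sinv B) B i j :=
  inv_aux h.tr.CB (h.cA i j) (h.Btw' i j)

theorem Cw' (h : Ctx A B C) (i j : m) : C *ᵥ colProd (sinv B) B i j
      = ((Fintype.card m : ℂ) * A i j)⁻¹ • colProd A (sinv A) i j :=
  inv_aux h.CB (h.cA i j) (h.Bu i j)

theorem extw (h : Ctx A B C) {M N : Matrix m m ℂ}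
    (e : ∀ i j, M *ᵥ colProd (sinv B)ᵀ Bᵀ i j = N *ᵥ colProd (sinv B)ᵀ Bᵀ i j) : M = N :=
  ext_colProd h.tB.sinv.transpose h.tB.transpose.ne e

theorem conj_w (h : Ctx A B C) {P p : Matrix m m ℂ} (hP : IsTheta A (sinv A) P p) (i j : m) :
    (C * P * B) *ᵥ colProd (sinv B)ᵀ Bᵀ i j = p i j • colProd (sinv B)ᵀ Bᵀ i j := by
  rw [← Matrix.mulVec_mulVec, h.Bw, Matrix.mulVec_smul, ← Matrix.mulVec_mulVec, hP i j,
    Matrix.mulVec_smul, h.Cu, smul_comm (p i j), smul_smul, mul_inv_cancel₀ (h.cA i j), one_smul]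

theorem conj_w2 (h : Ctx A B C) {P p : Matrix m m ℂ} (hP : IsTheta A (sinv A) P p) (i j : m) :
    (Bᵀ * P * Cᵀ) *ᵥ colProd (sinv B)ᵀ Bᵀ i j = p i j • colProd (sinv B)ᵀ Bᵀ i j := by
  rw [← Matrix.mulVec_mulVec, h.Ctw, Matrix.mulVec_smul, ← Matrix.mulVec_mulVec, hP i j,
    Matrix.mulVec_smul, h.Btu, smul_comm (p i j), smul_smul, inv_mul_cancel₀ (h.cA i j), one_smul]

theorem conj_eq (h : Ctx A B C) {P p : Matrix m m ℂ} (hP : IsTheta A (sinv A) P p) :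
    C * P * B = Bᵀ * P * Cᵀ :=
  h.extw fun i j => by rw [h.conj_w hP, h.conj_w2 hP]

/-- `Θ_A(F) ∈ N_A`. -/
theorem theta_mem (h : Ctx A B C) {F S : Matrix m m ℂ} (hF : IsTheta A (sinv A) F S) :
    IsTheta A (sinv A) S ((Fintype.card m : ℂ) • Fᵀ) := fun i j => by
  rw [(h.dualA F S).1 hF]; rfl

/-- `N_A ⊆ N_{B^(-)}`. -/
theorem memB (h : Ctx A B C) {F S : Matrix m m ℂ} (hF : IsTheta A (sinv A) F S) :
    IsTheta (sinv B) B F (C * S * B) := by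
  rw [h.dualB]
  intro i j
  rw [h.conj_w (h.theta_mem hF)]; rfl

theorem conj_u (h : Ctx A B C) {P p : Matrix m m ℂ} (hP : IsTheta A (sinv A) P p) (i j : m) :
    (C * P * B) *ᵥ colProd A (sinv A) i j = (C * p * B) i j • colProd A (sinv A) i j := by
  rw [← Matrix.mulVec_mulVec, h.Bu, Matrix.mulVec_smul, ← Matrix.mulVec_mulVec, h.memB hP i j,
    Matrix.mulVec_smul, h.Cw', smul_comm ((C * p * B) i j), smul_smul,
    mul_inv_cancel₀ (h.cA i j), one_smul]

theorem transA (h : Ctx A B C) {P p : Matrix m m ℂ} (hP : IsTheta A (sinv A) P p) :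
    IsTheta A (sinv A) Pᵀ pᵀ := by
  have := (theta_transpose h.tA h.tA.sinv hP).swap
  rwa [sinv_sinv'] at this

/-- `Θ_{A,B}(G) B⁻¹ ∈ N_A`. -/
theorem quot (h : Ctx A B C) {G S : Matrix m m ℂ} (hG : IsTheta A B G S) :
    IsTheta A (sinv A) (S * C) (Matrix.of fun i j => G j i / A i j) := fun i j => by
  rw [← Matrix.mulVec_mulVec, h.Cu, Matrix.mulVec_smul, (h.dual G S).1 hG, smul_smul]
  congr 1
  have := h.tA.card
  have := h.tA.ne i j
  simp only [Matrix.of_apply]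
  field_simp

theorem transH (h : Ctx A B C) {G S : Matrix m m ℂ} (hG : IsTheta A B G S) :
    IsTheta A B Gᵀ ((S * C)ᵀ * B) := by
  rw [h.dual]
  intro i j
  rw [← Matrix.mulVec_mulVec, h.Bw, Matrix.mulVec_smul, h.transA (h.quot hG) i j, smul_smul]
  congr 1
  have := h.tA.ne i j
  simp only [Matrix.of_apply, Matrix.transpose_apply, h.symm j i]
  field_simp

end Ctx

end helpers

/-- a vector on `Fin 4 × Fin n` from its four blocks -/
def vec4 {n : ℕ} (p q r s : Fin n → ℂ) : Fin 4 × Fin n → ℂ := fun x => ![p, q, r, s] x.1 x.2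

theorem blockMat_mulVec {n : ℕ} (P Q R S T U : Matrix (Fin n) (Fin n) ℂ)
    (p q r s : Fin n → ℂ) :
    (blockMat P Q R S T U) *ᵥ vec4 p q r s =
      vec4 (P *ᵥ p + Q *ᵥ q + R *ᵥ r + R *ᵥ s) (Q *ᵥ p + P *ᵥ q + R *ᵥ r + R *ᵥ s)
        (S *ᵥ p + S *ᵥ q + T *ᵥ r + U *ᵥ s) (S *ᵥ p + S *ᵥ q + U *ᵥ r + T *ᵥ s) := by
  funext ⟨k, x⟩
  have e : (blockMat P Q R S T U *ᵥ vec4 p q r s) (k, x) =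
      ∑ y, blockMat P Q R S T U (k, x) (0, y) * p y
      + ∑ y, blockMat P Q R S T U (k, x) (1, y) * q y
      + ∑ y, blockMat P Q R S T U (k, x) (2, y) * r y
      + ∑ y, blockMat P Q R S T U (k, x) (3, y) * s y := by
    simp only [mulVec, dotProduct, Fintype.sum_prod_type, Fin.sum_univ_four]
    rfl
  rw [e]
  fin_cases k <;> rfl

theorem smul_vec4 {n : ℕ} (c : ℂ) (p q r s : Fin n → ℂ) :
    c • vec4 p q r s = vec4 (c • p) (c • q) (c • r) (c • s) := by
  funext ⟨k, x⟩
  fin_cases k <;> rfl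

theorem blockA {n : ℕ} {SF H SG St TF K : Matrix (Fin n) (Fin n) ℂ} {p q : Fin n → ℂ}
    {al be : ℂ} (h1 : SF *ᵥ p = al • p) (h2 : SG *ᵥ q = be • p) (h3 : St *ᵥ p = be • q)
    (h4 : TF *ᵥ q = al • q) (e f : ℂ) (he : e * e = 1) (hf : f * f = 1) :
    ∃ c : ℂ, (blockMat (SF + H) (SF - H) SG St (TF + K) (TF - K)) *ᵥ
      vec4 (e • p) (e • p) (f • q) (f • q) = c • vec4 (e • p) (e • p) (f • q) (f • q) := by
  refine ⟨2 * (al + e * f * be), ?_⟩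
  rw [blockMat_mulVec, smul_vec4]
  simp only [Matrix.add_mulVec, Matrix.sub_mulVec, Matrix.mulVec_smul, h1, h2, h3, h4]
  congr 1 <;> funext x <;> simp only [Pi.add_apply, Pi.sub_apply, Pi.smul_apply, smul_eq_mul]
  · linear_combination (-2 * f * be * p x) * he
  · linear_combination (-2 * f * be * p x) * he
  · linear_combination (-2 * e * be * q x) * hf
  · linear_combination (-2 * e * be * q x) * hf

theorem blockB {n : ℕ} {SF H SG St TF K : Matrix (Fin n) (Fin n) ℂ} {p q : Fin n → ℂ}
    {ga : ℂ} (h1 : H *ᵥ p = ga • p) (h2 : K *ᵥ q = ga • q) (e f : ℂ) :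
    ∃ c : ℂ, (blockMat (SF + H) (SF - H) SG St (TF + K) (TF - K)) *ᵥ
      vec4 (e • p) ((-e) • p) (f • q) ((-f) • q)
        = c • vec4 (e • p) ((-e) • p) (f • q) ((-f) • q) := by
  refine ⟨2 * ga, ?_⟩
  rw [blockMat_mulVec, smul_vec4]
  simp only [Matrix.add_mulVec, Matrix.sub_mulVec, Matrix.mulVec_smul, h1, h2]
  congr 1 <;> funext x <;> simp only [Pi.add_apply, Pi.sub_apply, Pi.smul_apply, smul_eq_mul] <;>
    ring

theorem exists_of_eq {n : ℕ} {M : Matrix (Fin 4 × Fin n) (Fin 4 × Fin n) ℂ}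
    {v v' : Fin 4 × Fin n → ℂ} (e : v = v') (h : ∃ c : ℂ, M *ᵥ v' = c • v') :
    ∃ c : ℂ, M *ᵥ v = c • v := by
  rw [e]; exact h

theorem vec_case {n : ℕ} {V : Matrix (Fin 4 × Fin n) (Fin 4 × Fin n) ℂ}
    {r s : Fin 4 × Fin n} {p1 p2 p3 p4 q1 q2 q3 q4 : Fin n → ℂ}
    (hr : (fun y => V y r) = vec4 p1 p2 p3 p4) (hs : (fun y => V y s) = vec4 q1 q2 q3 q4) :
    colProd V (sinv V) r s = vec4 (fun x => p1 x * (q1 x)⁻¹) (fun x => p2 x * (q2 x)⁻¹)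
      (fun x => p3 x * (q3 x)⁻¹) (fun x => p4 x * (q4 x)⁻¹) := by
  funext y
  have e : colProd V (sinv V) r s y = V y r * (V y s)⁻¹ := rfl
  have h1 : V y r = _ := congrFun hr y
  have h2 : V y s = _ := congrFun hs y
  rw [e, h1, h2]
  obtain ⟨k, x⟩ := y
  fin_cases k <;> rfl

theorem Vcol0 {n : ℕ} (A B : Matrix (Fin n) (Fin n) ℂ) (d : ℂ) (i : Fin n) :
    (fun y => Vmat A B d y (0, i)) = vec4 (fun x => d * A x i) (fun x => -(d * A x i))
      (fun x => (B i x)⁻¹) (fun x => (B i x)⁻¹) := by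
  funext ⟨k, x⟩
  fin_cases k <;> rfl

theorem Vcol1 {n : ℕ} (A B : Matrix (Fin n) (Fin n) ℂ) (d : ℂ) (i : Fin n) :
    (fun y => Vmat A B d y (1, i)) = vec4 (fun x => -(d * A x i)) (fun x => d * A x i)
      (fun x => (B i x)⁻¹) (fun x => (B i x)⁻¹) := by
  funext ⟨k, x⟩
  fin_cases k <;> rfl

theorem Vcol2 {n : ℕ} (A B : Matrix (Fin n) (Fin n) ℂ) (d : ℂ) (i : Fin n) :
    (fun y => Vmat A B d y (2, i)) = vec4 (fun x => (B x i)⁻¹) (fun x => (B x i)⁻¹)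
      (fun x => d * A x i) (fun x => -(d * A x i)) := by
  funext ⟨k, x⟩
  fin_cases k <;> rfl

theorem Vcol3 {n : ℕ} (A B : Matrix (Fin n) (Fin n) ℂ) (d : ℂ) (i : Fin n) :
    (fun y => Vmat A B d y (3, i)) = vec4 (fun x => (B x i)⁻¹) (fun x => (B x i)⁻¹)
      (fun x => -(d * A x i)) (fun x => d * A x i) := by
  funext ⟨k, x⟩
  fin_cases k <;> rfl

theorem blockMat_mem_nomura_V {n : ℕ} (hn : 0 < n) (A B : Matrix (Fin n) (Fin n) ℂ)
    (h : IsInvertibleJonesPair A B) (hAs : Aᵀ = A)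
    (d : ℂ) (hd : d ^ 2 = (n : ℂ))
    (F G H K SF TF SG SGt : Matrix (Fin n) (Fin n) ℂ)
    (hSF : IsTheta A (sinv A) F SF)
    (hTF : IsTheta (sinv B) (sinv (sinv B)) F TF)
    (hSG : IsTheta A B G SG) (hSGt : IsTheta A B Gᵀ SGt)
    (hHK : Paired A B H K) :
    InNomura (Vmat A B d) (sinv (Vmat A B d))
      (blockMat (SF + H) (SF - H) SG SGtᵀ (TF + K) (TF - K)) := by
  obtain ⟨⟨hA, hBn, hJ1, hJ2⟩, hAn, hB⟩ := h
  have hn0 : (n : ℂ) ≠ 0 := by exact_mod_cast hn.ne'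
  have hc : (Fintype.card (Fin n) : ℂ) ≠ 0 := by simpa using hn.ne'
  have hd0 : d ≠ 0 := by
    rintro rfl
    exact hn0 (by simpa using hd.symm)
  have J1 := theta_of_jones hJ1
  have J2 := theta_of_jones hJ2
  obtain ⟨tA, tB⟩ := jones_typeII hc hA hB hAn hBn hAs J1
  obtain ⟨C, hBC⟩ := hB.exists_right_inv
  have X : Ctx A B C := ⟨tA, tB, hAs, hBC, mul_eq_one_comm.mp hBC, J1, J2⟩
  rw [sinv_sinv'] at hTF
  obtain ⟨S, hH, hK⟩ := hHK
  -- (1), (2)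
  have a1 := (X.dualA F SF).1 hSF
  have a2 := (X.dual G SG).1 hSG
  have a3 := X.dualT hSGt
  have a4 := (X.dualB F TF).1 hTF
  -- (3)
  have eT : TF = C * SF * B := X.extw fun i j => by
    rw [a4, (X.dualB F _).1 (X.memB hSF)]
  have b1 := X.memB (X.theta_mem hSF)
  have b4 := X.conj_u (X.theta_mem hSF)
  rw [← eT] at b4
  -- (4)
  have hP := X.quot hSG
  have e1 : C * (SG * C) * B = C * SG := by
    rw [Matrix.mul_assoc, Matrix.mul_assoc SG, X.CB, Matrix.mul_one]
  have c1 := X.conj_u hP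
  rw [e1] at c1
  have e2 : SGtᵀ * Cᵀ = C * SG := X.extw fun i j => by
    rw [← Matrix.mulVec_mulVec, ← Matrix.mulVec_mulVec, X.Ctw, a2, Matrix.mulVec_smul,
      Matrix.mulVec_smul, a3, X.Cu, smul_comm]
    rfl
  have c2 := c1
  rw [← e2] at c2
  set L := C * (Matrix.of fun i j => G j i / A i j) * B with hL
  have b2 : ∀ i j, SG *ᵥ colProd A (sinv A) i j
      = (L i j * ((Fintype.card (Fin n) : ℂ) * A i j)) • colProd (sinv B) B i j := by
    intro i j
    have := congrArg (B *ᵥ ·) (c1 i j)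
    simpa only [Matrix.mulVec_mulVec, ← Matrix.mul_assoc, X.BC, Matrix.one_mul,
      Matrix.mulVec_smul, X.Bu, smul_smul] using this
  have b3 : ∀ i j, SGtᵀ *ᵥ colProd (sinv B) B i j
      = (L i j * ((Fintype.card (Fin n) : ℂ) * A i j)) • colProd A (sinv A) i j := by
    intro i j
    have := c2 i j
    rw [← Matrix.mulVec_mulVec, X.Ctu, Matrix.mulVec_smul] at this
    have := congrArg (((Fintype.card (Fin n) : ℂ) * A i j) • ·) this
    simp only [smul_smul, mul_inv_cancel₀ (X.cA i j), one_smul] at this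
    rw [this, mul_comm]
  -- (5)
  have k1 : IsTheta (sinv A) (sinv B)ᵀ K Sᵀ := by
    have := theta_transpose tA tB.transpose hK
    rwa [sinv_transpose', Matrix.transpose_transpose] at this
  have k1 := k1.swap
  rw [Matrix.transpose_transpose] at k1
  -- (6)
  have g1 := theta_transpose tA tB (X.transH hH)
  rw [Matrix.transpose_transpose] at g1
  have g1 := g1.swap
  have g2 := X.tr.transH hK
  rw [Matrix.transpose_transpose] at g2
  have e3 : ((S * C)ᵀ * B)ᵀ = (Sᵀ * Cᵀ)ᵀ * Bᵀ := by
    have := congrArg (· * Bᵀ) (X.conj_eq (X.quot hH))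
    have hCBt : Cᵀ * Bᵀ = 1 := X.tr.CB
    simp only [Matrix.mul_assoc, hCBt, X.CB, Matrix.mul_one] at this
    simp only [Matrix.transpose_mul, Matrix.transpose_transpose, Matrix.mul_assoc] at this ⊢
    rw [← this]
  rw [e3] at g1
  have one1 : (1 : ℂ) * 1 = 1 := by norm_num
  have one2 : (-1 : ℂ) * -1 = 1 := by norm_num
  rintro ⟨r, i⟩ ⟨s, j⟩
  have A11 := fun e f he hf => blockA (H := H) (K := K) (a1 i j) (a2 i j) (a3 i j) (a4 i j) e f he hf
  have A33 := fun e f he hf => blockA (H := H) (K := K) (b1 i j) (b2 i j) (b3 i j) (b4 i j) e f he hf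
  have B13 := fun e f => blockB (SF := SF) (SG := SG) (St := SGtᵀ) (TF := TF)
    (hH i j) (k1 i j) e f
  have B31 := fun e f => blockB (SF := SF) (SG := SG) (St := SGtᵀ) (TF := TF)
    (g1 i j) (g2 i j) e f
  fin_cases r <;> fin_cases s
  · refine exists_of_eq ((vec_case (Vcol0 A B d i) (Vcol0 A B d j)).trans ?_) (A11 1 1 one1 one1)
    congr 1 <;> funext x <;> simp [colProd, sinv] <;> field_simp
  · refine exists_of_eq ((vec_case (Vcol0 A B d i) (Vcol1 A B d j)).trans ?_) (A11 (-1) 1 one2 one1)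
    congr 1 <;> funext x <;> simp [colProd, sinv] <;> field_simp
  · refine exists_of_eq ((vec_case (Vcol0 A B d i) (Vcol2 A B d j)).trans ?_) (B13 d d⁻¹)
    congr 1 <;> funext x <;> simp [colProd, sinv] <;> field_simp
  · refine exists_of_eq ((vec_case (Vcol0 A B d i) (Vcol3 A B d j)).trans ?_) (B13 d (-d⁻¹))
    congr 1 <;> funext x <;> simp [colProd, sinv] <;> field_simp
  · refine exists_of_eq ((vec_case (Vcol1 A B d i) (Vcol0 A B d j)).trans ?_) (A11 (-1) 1 one2 one1)
    congr 1 <;> funext x <;> simp [colProd, sinv] <;> field_simp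
  · refine exists_of_eq ((vec_case (Vcol1 A B d i) (Vcol1 A B d j)).trans ?_) (A11 1 1 one1 one1)
    congr 1 <;> funext x <;> simp [colProd, sinv] <;> field_simp
  · refine exists_of_eq ((vec_case (Vcol1 A B d i) (Vcol2 A B d j)).trans ?_) (B13 (-d) d⁻¹)
    congr 1 <;> funext x <;> simp [colProd, sinv] <;> field_simp
  · refine exists_of_eq ((vec_case (Vcol1 A B d i) (Vcol3 A B d j)).trans ?_) (B13 (-d) (-d⁻¹))
    congr 1 <;> funext x <;> simp [colProd, sinv] <;> field_simp
  · refine exists_of_eq ((vec_case (Vcol2 A B d i) (Vcol0 A B d j)).trans ?_) (B31 d⁻¹ d)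
    congr 1 <;> funext x <;> simp [colProd, sinv] <;> field_simp
  · refine exists_of_eq ((vec_case (Vcol2 A B d i) (Vcol1 A B d j)).trans ?_) (B31 (-d⁻¹) d)
    congr 1 <;> funext x <;> simp [colProd, sinv] <;> field_simp
  · refine exists_of_eq ((vec_case (Vcol2 A B d i) (Vcol2 A B d j)).trans ?_) (A33 1 1 one1 one1)
    congr 1 <;> funext x <;> simp [colProd, sinv] <;> field_simp
  · refine exists_of_eq ((vec_case (Vcol2 A B d i) (Vcol3 A B d j)).trans ?_) (A33 1 (-1) one1 one2)
    congr 1 <;> funext x <;> simp [colProd, sinv] <;> field_simp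
  · refine exists_of_eq ((vec_case (Vcol3 A B d i) (Vcol0 A B d j)).trans ?_) (B31 d⁻¹ (-d))
    congr 1 <;> funext x <;> simp [colProd, sinv] <;> field_simp
  · refine exists_of_eq ((vec_case (Vcol3 A B d i) (Vcol1 A B d j)).trans ?_) (B31 (-d⁻¹) (-d))
    congr 1 <;> funext x <;> simp [colProd, sinv] <;> field_simp
  · refine exists_of_eq ((vec_case (Vcol3 A B d i) (Vcol2 A B d j)).trans ?_) (A33 1 (-1) one1 one2)
    congr 1 <;> funext x <;> simp [colProd, sinv] <;> field_simp
  · refine exists_of_eq ((vec_case (Vcol3 A B d i) (Vcol3 A B d j)).trans ?_) (A33 1 1 one1 one1)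
    congr 1 <;> funext x <;> simp [colProd, sinv] <;> field_simp
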